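/- Let H be Hermitian on ℂ^{d}⊗ℂ^{d}⊗ℂ^{d} and U Haar-random on systems 2,3. Then E_U[tr((tr₃(U₂₃ H U₂₃†))²)] = d/(d²+1)·(tr(H²) + tr(H₁²)) ≥ d/(d²+1)·tr(H²), where H₁ = tr₂₃ H. -/

import Mathlib

open MeasureTheory
open scoped Matrix Kronecker BigOperators

noncomputable instance (d : ℕ) :
    MeasurableSpace (Matrix (Fin d × Fin d) (Fin d × Fin d) ℂ) :=
  inferInstanceAs (MeasurableSpace (Fin d × Fin d → Fin d × Fin d → ℂ))

/-- Partial trace over the third tensor factor. -/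
noncomputable def ptrace3 {d : ℕ} (C : Matrix (Fin d × Fin d × Fin d) (Fin d × Fin d × Fin d) ℂ) :
    Matrix (Fin d × Fin d) (Fin d × Fin d) ℂ :=
  Matrix.of fun a b => ∑ k : Fin d, C (a.1, a.2, k) (b.1, b.2, k)

/-- Partial trace over systems 2 and 3. -/
noncomputable def ptrace23 {d : ℕ} (C : Matrix (Fin d × Fin d × Fin d) (Fin d × Fin d × Fin d) ℂ) :
    Matrix (Fin d) (Fin d) ℂ :=
  Matrix.of fun a b => ∑ p : Fin d × Fin d, C (a, p) (b, p)

/-- block of a tripartite matrix with respect to the first system -/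
def hblk {d : ℕ} (H : Matrix (Fin d × Fin d × Fin d) (Fin d × Fin d × Fin d) ℂ) (a b : Fin d) :
    Matrix (Fin d × Fin d) (Fin d × Fin d) ℂ := Matrix.of fun p q => H (a, p) (b, q)

lemma kron_conj_apply {d : ℕ} (U : Matrix (Fin d × Fin d) (Fin d × Fin d) ℂ)
    (H : Matrix (Fin d × Fin d × Fin d) (Fin d × Fin d × Fin d) ℂ) (a b : Fin d)
    (p q : Fin d × Fin d) :
    (((1 : Matrix (Fin d) (Fin d) ℂ) ⊗ₖ U) * H * ((1 : Matrix (Fin d) (Fin d) ℂ) ⊗ₖ U)ᴴ)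
      (a, p) (b, q) = (U * hblk H a b * Uᴴ) p q := by
  have h1 : ∀ y : Fin d × Fin d × Fin d, (((1 : Matrix (Fin d) (Fin d) ℂ) ⊗ₖ U) * H) (a, p) y
      = ∑ x, U p x * H (a, x) y := by
    intro y
    rw [Matrix.mul_apply, Fintype.sum_prod_type, Finset.sum_eq_single a]
    · simp [Matrix.kroneckerMap_apply]
    · intro c _ hc
      simp [Matrix.kroneckerMap_apply, Matrix.one_apply_ne hc.symm]
    · simp
  rw [Matrix.mul_apply, Fintype.sum_prod_type, Finset.sum_eq_single b]
  · simp only [h1]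
    simp [Matrix.mul_apply, Matrix.kroneckerMap_apply, hblk]
  · intro c _ hc
    simp [Matrix.kroneckerMap_apply, Matrix.one_apply_ne hc.symm]
  · simp

lemma trace_expand {d : ℕ} (U : Matrix (Fin d × Fin d) (Fin d × Fin d) ℂ)
    (H : Matrix (Fin d × Fin d × Fin d) (Fin d × Fin d × Fin d) ℂ) :
    Matrix.trace
          (ptrace3 (((1 : Matrix (Fin d) (Fin d) ℂ) ⊗ₖ U) * H *
              ((1 : Matrix (Fin d) (Fin d) ℂ) ⊗ₖ U)ᴴ) *
            ptrace3 (((1 : Matrix (Fin d) (Fin d) ℂ) ⊗ₖ U) * H *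
              ((1 : Matrix (Fin d) (Fin d) ℂ) ⊗ₖ U)ᴴ))
    = ∑ a, ∑ b, ∑ x, ∑ y, ∑ u, ∑ v, (U * hblk H a b * Uᴴ) (x, u) (y, u) *
        (U * hblk H b a * Uᴴ) (y, v) (x, v) := by
  have hg : ∀ X : Matrix (Fin d × Fin d) (Fin d × Fin d) ℂ, (X * X).trace =
      ∑ a, ∑ x, ∑ b, ∑ y, X (a, x) (b, y) * X (b, y) (a, x) := by
    intro X
    simp only [Matrix.trace, Matrix.diag, Matrix.mul_apply, Fintype.sum_prod_type]
  rw [hg]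
  simp only [ptrace3, Matrix.of_apply, kron_conj_apply, Finset.sum_mul_sum]
  refine Finset.sum_congr rfl fun a _ => ?_
  rw [Finset.sum_comm]

lemma trace_sq_blocks {d : ℕ}
    (H : Matrix (Fin d × Fin d × Fin d) (Fin d × Fin d × Fin d) ℂ) :
    (H * H).trace = ∑ a, ∑ b, (hblk H a b * hblk H b a).trace := by
  simp only [Matrix.trace, Matrix.diag, Matrix.mul_apply, hblk, Matrix.of_apply]
  rw [Fintype.sum_prod_type]
  refine Finset.sum_congr rfl fun a _ => ?_
  simp only [Fintype.sum_prod_type (f := fun z : Fin d × Fin d × Fin d => _)]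
  rw [Finset.sum_comm]

lemma trace_pt_blocks {d : ℕ}
    (H : Matrix (Fin d × Fin d × Fin d) (Fin d × Fin d × Fin d) ℂ) :
    (ptrace23 H * ptrace23 H).trace = ∑ a, ∑ b, (hblk H a b).trace * (hblk H b a).trace := by
  simp only [Matrix.trace, Matrix.diag, Matrix.mul_apply, hblk, Matrix.of_apply, ptrace23]

lemma pt23_re_nonneg {d : ℕ}
    (H : Matrix (Fin d × Fin d × Fin d) (Fin d × Fin d × Fin d) ℂ) (hH : H.IsHermitian) :
    0 ≤ ((ptrace23 H * ptrace23 H).trace).re := by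
  have h : (ptrace23 H)ᴴ = ptrace23 H := by
    ext a b
    simp only [Matrix.conjTranspose_apply, ptrace23, Matrix.of_apply, star_sum]
    exact Finset.sum_congr rfl fun p _ => hH.apply _ _
  have h2 : ∀ a b, ptrace23 H b a = star (ptrace23 H a b) := fun a b => by
    conv_lhs => rw [← h]
    rfl
  simp only [Matrix.trace, Matrix.diag, Matrix.mul_apply, Complex.re_sum]
  refine Finset.sum_nonneg fun a _ => Finset.sum_nonneg fun b _ => ?_
  rw [h2 a b]
  simp [Complex.mul_re]
  nlinarith [sq_nonneg (ptrace23 H a b).re, sq_nonneg (ptrace23 H a b).im]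

/-- Covariance of a 4-tensor under `V ⊗ V`. -/
def Covar {n : Type*} [Fintype n] [DecidableEq n] (W : n → n → n → n → ℂ) : Prop :=
  ∀ V ∈ Matrix.unitaryGroup n ℂ, ∀ i k j l, W i k j l =
    ∑ a, ∑ b, ∑ c, ∑ e, V i a * star (V k b) * V j c * star (V l e) * W a b c e

section alg
variable {n : Type*} [Fintype n] [DecidableEq n] {W : n → n → n → n → ℂ}

lemma covar_phase (hW : Covar W) (t i k j l : n)
    (h : (if i = t then Complex.I else 1) * star (if k = t then Complex.I else 1) *
      (if j = t then Complex.I else 1) * star (if l = t then Complex.I else 1) ≠ 1) :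
    W i k j l = 0 := by
  let v : n → ℂ := fun s => if s = t then Complex.I else 1
  have hV : Matrix.diagonal v ∈ Matrix.unitaryGroup n ℂ := by
    rw [Matrix.mem_unitaryGroup_iff, Matrix.star_eq_conjTranspose, Matrix.diagonal_conjTranspose,
      Matrix.diagonal_mul_diagonal, ← Matrix.diagonal_one]
    congr 1
    ext s
    by_cases hs : s = t <;> simp [v, hs]
  have := hW _ hV i k j l
  rw [Finset.sum_eq_single i (by intro b _ hb; simp [Matrix.diagonal_apply_ne' _ hb]) (by simp),
    Finset.sum_eq_single k (by intro b _ hb; simp [Matrix.diagonal_apply_ne' _ hb]) (by simp),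
    Finset.sum_eq_single j (by intro b _ hb; simp [Matrix.diagonal_apply_ne' _ hb]) (by simp),
    Finset.sum_eq_single l (by intro b _ hb; simp [Matrix.diagonal_apply_ne' _ hb]) (by simp)] at this
  simp only [Matrix.diagonal_apply_eq] at this
  have h2 : (v i * star (v k) * v j * star (v l) - 1) * W i k j l = 0 := by
    linear_combination -this
  rcases mul_eq_zero.1 h2 with h3 | h3
  · exact absurd (sub_eq_zero.1 h3) h
  · exact h3

lemma covar_perm (hW : Covar W) (σ : Equiv.Perm n) (i k j l : n) :
    W i k j l = W (σ i) (σ k) (σ j) (σ l) := by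
  let V : Matrix n n ℂ := Matrix.of fun a b => if b = σ a then 1 else 0
  have hV : V ∈ Matrix.unitaryGroup n ℂ := by
    rw [Matrix.mem_unitaryGroup_iff, Matrix.star_eq_conjTranspose]
    ext a b
    simp [V, Matrix.mul_apply, Matrix.one_apply, eq_comm]
  have := hW _ hV i k j l
  simpa [V] using this

lemma exists_perm2 {i j i' j' : n} (h : i ≠ j) (h' : i' ≠ j') :
    ∃ σ : Equiv.Perm n, σ i = i' ∧ σ j = j' := by
  refine ⟨Equiv.swap (Equiv.swap i i' j) j' * Equiv.swap i i', ?_, ?_⟩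
  · have : i' ≠ Equiv.swap i i' j := by
      intro e
      have e2 : Equiv.swap i i' i = Equiv.swap i i' j := by simpa using e
      exact h ((Equiv.swap i i').injective e2)
    simp [Equiv.swap_apply_of_ne_of_ne this h']
  · simp

lemma covar_rot (hW : Covar W) {i j : n} (h : i ≠ j) (h1 : W j j j j = W i i i i)
    (h2 : W j j i i = W i i j j) (h3 : W j i i j = W i j j i) :
    W i i i i = W i i j j + W i j j i := by
  let w : n → ℂ := fun s => if s = i then 1 else if s = j then -2 else 0
  have hww : ∑ s, w s * w s = 5 := by
    have : ∀ s, w s * w s = (if s = i then 1 else 0) + (if s = j then 4 else 0) := by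
      intro s
      by_cases hs : s = i
      · subst hs; simp [w, h]
      · by_cases hs' : s = j
        · subst hs'; simp [w, h.symm]; norm_num
        · simp [w, hs, hs']
    simp only [this, Finset.sum_add_distrib]
    simp; norm_num
  have hsw : ∀ s, star (w s) = w s := by
    intro s; simp only [w]; split_ifs <;> simp
  let V : Matrix n n ℂ := 1 - (2/5 : ℂ) • Matrix.vecMulVec w w
  have hVs : star V = V := by
    ext a b
    simp only [Matrix.star_apply, V, Matrix.sub_apply, Matrix.smul_apply, Matrix.vecMulVec_apply,
      star_sub, smul_eq_mul, star_mul, hsw, Matrix.one_apply]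
    have : star (2/5 : ℂ) = 2/5 := by simp
    rw [this]
    by_cases hab : a = b
    · subst hab; simp; ring
    · simp [hab, Ne.symm hab]; ring
  have hV : V ∈ Matrix.unitaryGroup n ℂ := by
    rw [Matrix.mem_unitaryGroup_iff, hVs]
    have h5 : Matrix.vecMulVec w w * Matrix.vecMulVec w w = (5:ℂ) • Matrix.vecMulVec w w := by
      ext a b
      simp only [Matrix.mul_apply, Matrix.vecMulVec_apply, Matrix.smul_apply, smul_eq_mul]
      rw [← hww, Finset.sum_mul]
      exact Finset.sum_congr rfl fun s _ => by ring
    simp only [V, sub_mul, mul_sub, one_mul, mul_one, smul_mul_assoc, mul_smul_comm, h5, smul_smul]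
    module
  have hrow : ∀ s, V i s = if s = i then 3/5 else if s = j then 4/5 else 0 := by
    intro s
    by_cases hs : s = i
    · subst hs; simp [V, w, Matrix.vecMulVec_apply]; norm_num
    · by_cases hs' : s = j
      · subst hs'; simp [V, w, Matrix.vecMulVec_apply, hs, h]; norm_num
      · simp [V, w, Matrix.vecMulVec_apply, hs, hs', Matrix.one_apply, Ne.symm hs]
  have hrs : ∀ s, star (V i s) = V i s := by
    intro s; rw [hrow]; split_ifs <;> simp
  have hsum : ∀ F : n → ℂ, ∑ s, V i s * F s = 3/5 * F i + 4/5 * F j := by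
    intro F
    have : ∀ s, V i s * F s = (if s = i then 3/5 * F i else 0) + (if s = j then 4/5 * F j else 0) := by
      intro s
      rw [hrow]
      by_cases hs : s = i
      · subst hs; simp [h]
      · by_cases hs' : s = j
        · subst hs'; simp [hs]
        · simp [hs, hs']
    simp only [this, Finset.sum_add_distrib]
    simp
  have key := hW _ hV i i i i
  simp only [hrs, mul_assoc, ← Finset.mul_sum, hsum] at key
  have z := fun a b c e hh => covar_phase hW i a b c e hh
  have hI : (Complex.I) ≠ 1 := by intro e; simpa using congrArg Complex.re e
  have hI' : (-Complex.I) ≠ 1 := by intro e; simpa using congrArg Complex.re e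
  have hm : (-1 : ℂ) ≠ 1 := by norm_num
  rw [z i i i j (by simp [h.symm, hI]), z i i j i (by simp [h.symm, hI']),
    z i j i i (by simp [h.symm, hI]), z j i i i (by simp [h.symm, hI']),
    z j j j i (by simp [h.symm, hI']), z j j i j (by simp [h.symm, hI]),
    z j i j j (by simp [h.symm, hI']), z i j j j (by simp [h.symm, hI]),
    z i j i j (by simp [h.symm, hm]), z j i j i (by simp [h.symm, hm]), h1, h2, h3] at key
  linear_combination (625/288 : ℂ) * key

lemma covar_struct (hW : Covar W) : ∃ q r : ℂ, (∀ i, W i i i i = q + r) ∧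
    (∀ i j, i ≠ j → W i i j j = q) ∧ (∀ i j, i ≠ j → W i j j i = r) := by
  by_cases hn : Nontrivial n
  · obtain ⟨i, j, h⟩ := hn
    refine ⟨W i i j j, W i j j i, ?_, ?_, ?_⟩
    · intro k
      have hk : ∀ k, W k k k k = W i i i i := fun k => by
        have := covar_perm hW (Equiv.swap k i) k k k k
        simpa using this
      obtain ⟨σ, s1, s2⟩ := exists_perm2 h h.symm
      rw [hk, covar_rot hW h (hk j) _ _]
      · rw [covar_perm hW σ i i j j, s1, s2]
      · rw [covar_perm hW σ i j j i, s1, s2]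
    · intro a b hab
      obtain ⟨σ, s1, s2⟩ := exists_perm2 hab h
      rw [covar_perm hW σ, s1, s2]
    · intro a b hab
      obtain ⟨σ, s1, s2⟩ := exists_perm2 hab h
      rw [covar_perm hW σ, s1, s2]
  · rw [not_nontrivial_iff_subsingleton] at hn
    by_cases he : Nonempty n
    · obtain ⟨i⟩ := he
      refine ⟨W i i i i, 0, fun k => ?_, fun a b hab => absurd (Subsingleton.elim a b) hab,
        fun a b hab => absurd (Subsingleton.elim a b) hab⟩
      rw [Subsingleton.elim k i, add_zero]
    · exact ⟨0, 0, fun k => (he ⟨k⟩).elim, fun k => (he ⟨k⟩).elim, fun k => (he ⟨k⟩).elim⟩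
end alg

lemma covar_sum {d : ℕ} (hd : 1 ≤ d)
    {W : Fin d × Fin d → Fin d × Fin d → Fin d × Fin d → Fin d × Fin d → ℂ} (hW : Covar W) :
    ∑ x, ∑ y, ∑ u, ∑ v, W (x, u) (y, u) (y, v) (x, v) =
      ((d : ℂ) / ((d : ℂ) ^ 2 + 1)) * (∑ i, ∑ j, W i i j j + ∑ i, ∑ j, W i j j i) := by
  obtain ⟨q, r, hp, hq, hr⟩ := covar_struct hW
  have e1 : ∀ i j, W i i j j = q + if i = j then r else 0 := by
    intro i j
    by_cases h : i = j
    · subst h; simp [hp]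
    · simp [h, hq]
  have e2 : ∀ i j, W i j j i = r + if i = j then q else 0 := by
    intro i j
    by_cases h : i = j
    · subst h; simp [hp, add_comm]
    · simp [h, hr]
  have e3 : ∀ x y u v, W (x, u) (y, u) (y, v) (x, v) =
      (if x = y then q else 0) + (if u = v then r else 0) := by
    intro x y u v
    by_cases h : x = y
    · subst h
      rw [e1]; simp
    · by_cases h' : u = v
      · subst h'
        rw [e2]; simp [h]
      · rw [covar_phase hW (x, u)]
        · simp [h, h']
        · have hI : (Complex.I) ≠ 1 := by intro e; simpa using congrArg Complex.re e
          simp [h, h', Ne.symm h, Ne.symm h', hI]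
  simp only [e1, e2, e3, Finset.sum_add_distrib]
  simp
  have hne : (d : ℂ) ^ 2 + 1 ≠ 0 := by
    have : ((d ^ 2 + 1 : ℕ) : ℂ) ≠ 0 := Nat.cast_ne_zero.2 (by positivity)
    simpa using this
  field_simp
  ring

section meas
variable {d : ℕ} (μ : Measure (Matrix.unitaryGroup (Fin d × Fin d) ℂ)) [IsProbabilityMeasure μ]

lemma meas_conj (P : Matrix (Fin d × Fin d) (Fin d × Fin d) ℂ) (i k : Fin d × Fin d) :
    Measurable fun U : Matrix.unitaryGroup (Fin d × Fin d) ℂ =>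
      (U.1 * P * U.1ᴴ) i k := by
  have hm : ∀ a b, Measurable fun U : Matrix.unitaryGroup (Fin d × Fin d) ℂ =>
      U.1 a b := fun a b =>
    (measurable_pi_apply b).comp ((measurable_pi_apply a).comp measurable_subtype_coe)
  simp only [Matrix.mul_apply, Matrix.conjTranspose_apply]
  refine Finset.measurable_sum _ fun a _ => Measurable.mul ?_ ?_
  · exact Finset.measurable_sum _ fun b _ => (hm _ _).mul_const _
  · exact Complex.continuous_conj.measurable.comp (hm _ _)

lemma bound_conj (P : Matrix (Fin d × Fin d) (Fin d × Fin d) ℂ) (i k : Fin d × Fin d)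
    (U : Matrix.unitaryGroup (Fin d × Fin d) ℂ) :
    ‖(U.1 * P * U.1ᴴ) i k‖ ≤ ∑ a, ∑ b, ‖P b a‖ := by
  simp only [Matrix.mul_apply, Matrix.conjTranspose_apply]
  refine (norm_sum_le _ _).trans (Finset.sum_le_sum fun a _ => ?_)
  rw [norm_mul, norm_star]
  refine (mul_le_of_le_one_right (norm_nonneg _) (entry_norm_bound_of_unitary U.2 k a)).trans ?_
  refine (norm_sum_le _ _).trans (Finset.sum_le_sum fun b _ => ?_)
  rw [norm_mul]
  exact mul_le_of_le_one_left (norm_nonneg _) (entry_norm_bound_of_unitary U.2 i b)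

lemma integrable_pair (P Q : Matrix (Fin d × Fin d) (Fin d × Fin d) ℂ) (i k j l : Fin d × Fin d) :
    Integrable (fun U : Matrix.unitaryGroup (Fin d × Fin d) ℂ =>
      (U.1 * P * U.1ᴴ) i k *
      (U.1 * Q * U.1ᴴ) j l) μ := by
  refine Integrable.of_bound ((meas_conj P i k).mul (meas_conj Q j l)).aestronglyMeasurable
    ((∑ a, ∑ b, ‖P b a‖) * (∑ a, ∑ b, ‖Q b a‖)) (Filter.Eventually.of_forall fun U => ?_)
  rw [norm_mul]
  exact mul_le_mul (bound_conj P i k U) (bound_conj Q j l U) (norm_nonneg _)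
    (Finset.sum_nonneg fun _ _ => Finset.sum_nonneg fun _ _ => norm_nonneg _)

/-- second moment tensor -/
noncomputable def mom (P Q : Matrix (Fin d × Fin d) (Fin d × Fin d) ℂ) (i k j l : Fin d × Fin d) : ℂ :=
  ∫ U : Matrix.unitaryGroup (Fin d × Fin d) ℂ, (U.1 * P * U.1ᴴ) i k *
      (U.1 * Q * U.1ᴴ) j l ∂μ

lemma conj_apply4 {n : Type*} [Fintype n] (V X Y : Matrix n n ℂ) (i k j l : n) :
    (V * X * Vᴴ) i k * (V * Y * Vᴴ) j l =
    ∑ a, ∑ b, ∑ c, ∑ e, V i a * star (V k b) * V j c * star (V l e) * (X a b * Y c e) := by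
  have h : ∀ (X : Matrix n n ℂ) i k, (V * X * Vᴴ) i k = ∑ a, ∑ b, V i a * star (V k b) * X a b := by
    intro X i k
    simp only [Matrix.mul_apply, Matrix.conjTranspose_apply, Finset.sum_mul]
    rw [Finset.sum_comm]
    exact Finset.sum_congr rfl fun a _ => Finset.sum_congr rfl fun b _ => by ring
  rw [h, h, Finset.sum_mul]
  refine Finset.sum_congr rfl fun a _ => ?_
  rw [Finset.sum_mul]
  refine Finset.sum_congr rfl fun b _ => ?_
  simp only [Finset.mul_sum]
  exact Finset.sum_congr rfl fun c _ => Finset.sum_congr rfl fun e _ => by ring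

lemma mom_covar (hinv : ∀ V : Matrix.unitaryGroup (Fin d × Fin d) ℂ, μ.map (fun U => V * U) = μ)
    (P Q : Matrix (Fin d × Fin d) (Fin d × Fin d) ℂ) : Covar (mom μ P Q) := by
  intro V hV i k j l
  have hae : AEMeasurable (fun U => (⟨V, hV⟩ : Matrix.unitaryGroup (Fin d × Fin d) ℂ) * U) μ := by
    by_contra hc
    have h0 := hinv ⟨V, hV⟩
    rw [Measure.map_of_not_aemeasurable hc] at h0
    exact IsProbabilityMeasure.ne_zero μ h0.symm
  have h1 : mom μ P Q i k j l = ∫ U : Matrix.unitaryGroup (Fin d × Fin d) ℂ,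
      ∑ a, ∑ b, ∑ c, ∑ e, V i a * star (V k b) * V j c * star (V l e) *
      ((U.1 * P * U.1ᴴ) a b *
      (U.1 * Q * U.1ᴴ) c e) ∂μ := by
    unfold mom
    conv_lhs => rw [← hinv ⟨V, hV⟩]
    refine (integral_map hae
      ((meas_conj P i k).mul (meas_conj Q j l)).aestronglyMeasurable).trans ?_
    refine integral_congr_ae (Filter.Eventually.of_forall fun U => ?_)
    simp only [Pi.mul_apply]
    rw [← conj_apply4]
    simp only [Submonoid.coe_mul, Matrix.conjTranspose_mul, Matrix.mul_assoc]
  have hint := integrable_pair μ P Q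
  rw [h1, integral_finsetSum _ fun a _ => integrable_finsetSum _ fun b _ =>
    integrable_finsetSum _ fun c _ => integrable_finsetSum _ fun e _ => (hint a b c e).const_mul _]
  refine Finset.sum_congr rfl fun a _ => ?_
  rw [integral_finsetSum _ fun b _ =>
    integrable_finsetSum _ fun c _ => integrable_finsetSum _ fun e _ => (hint a b c e).const_mul _]
  refine Finset.sum_congr rfl fun b _ => ?_
  rw [integral_finsetSum _ fun c _ => integrable_finsetSum _ fun e _ => (hint a b c e).const_mul _]
  refine Finset.sum_congr rfl fun c _ => ?_
  rw [integral_finsetSum _ fun e _ => (hint a b c e).const_mul _]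
  refine Finset.sum_congr rfl fun e _ => ?_
  rw [integral_const_mul]
  rfl

lemma mom_sum1 (P Q : Matrix (Fin d × Fin d) (Fin d × Fin d) ℂ) :
    ∑ i, ∑ j, mom μ P Q i i j j = P.trace * Q.trace := by
  have hint := integrable_pair μ P Q
  have h : ∀ (U : Matrix.unitaryGroup (Fin d × Fin d) ℂ) (X : Matrix _ _ ℂ),
      (U.1 * X * U.1ᴴ).trace = X.trace := by
    intro U X
    rw [Matrix.trace_mul_comm, ← Matrix.mul_assoc, ← Matrix.star_eq_conjTranspose,
      Matrix.mem_unitaryGroup_iff'.1 U.2, one_mul]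
  unfold mom
  simp_rw [← integral_finsetSum _ fun j _ => hint _ _ j j]
  rw [← integral_finsetSum _ fun i _ => integrable_finsetSum _ fun j _ => hint i i j j]
  calc _ = ∫ U : Matrix.unitaryGroup (Fin d × Fin d) ℂ, P.trace * Q.trace ∂μ := by
        refine integral_congr_ae (Filter.Eventually.of_forall fun U => ?_)
        simp only
        rw [← h U P, ← h U Q, Matrix.trace, Matrix.trace, Finset.sum_mul_sum]
        rfl
    _ = _ := by simp

lemma mom_sum2 (P Q : Matrix (Fin d × Fin d) (Fin d × Fin d) ℂ) :
    ∑ i, ∑ j, mom μ P Q i j j i = (P * Q).trace := by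
  have hint := integrable_pair μ P Q
  have h : ∀ (U : Matrix.unitaryGroup (Fin d × Fin d) ℂ),
      ((U.1 * P * U.1ᴴ) *
        (U.1 * Q * U.1ᴴ)).trace = (P * Q).trace := by
    intro U
    have hU : U.1ᴴ * U.1 = 1 := Matrix.mem_unitaryGroup_iff'.1 U.2
    calc _ = (U.1 * (P * (U.1ᴴ * U.1) * Q *
          U.1ᴴ)).trace := by simp only [Matrix.mul_assoc]
      _ = _ := by
        rw [Matrix.trace_mul_comm, hU, Matrix.mul_one, Matrix.mul_assoc, hU, Matrix.mul_one]
  unfold mom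
  simp_rw [← integral_finsetSum _ fun j _ => hint _ j j _]
  rw [← integral_finsetSum _ fun i _ => integrable_finsetSum _ fun j _ => hint i j j i]
  calc _ = ∫ U : Matrix.unitaryGroup (Fin d × Fin d) ℂ, (P * Q).trace ∂μ := by
        refine integral_congr_ae (Filter.Eventually.of_forall fun U => ?_)
        simp only
        rw [← h U, Matrix.trace]
        simp only [Matrix.diag, Matrix.mul_apply (N := _ * Q * _)]
    _ = _ := by simp

lemma integrable_big (H : Matrix (Fin d × Fin d × Fin d) (Fin d × Fin d × Fin d) ℂ) :
    Integrable (fun U : Matrix.unitaryGroup (Fin d × Fin d) ℂ =>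
      ∑ a, ∑ b, ∑ x, ∑ y, ∑ u, ∑ v,
        (U.1 * hblk H a b * U.1ᴴ) (x, u) (y, u) *
        (U.1 * hblk H b a * U.1ᴴ) (y, v) (x, v)) μ :=
  integrable_finsetSum _ fun a _ => integrable_finsetSum _ fun b _ =>
    integrable_finsetSum _ fun x _ => integrable_finsetSum _ fun y _ =>
    integrable_finsetSum _ fun u _ => integrable_finsetSum _ fun v _ => integrable_pair μ _ _ _ _ _ _

lemma integral_big (H : Matrix (Fin d × Fin d × Fin d) (Fin d × Fin d × Fin d) ℂ) :
    (∫ U : Matrix.unitaryGroup (Fin d × Fin d) ℂ,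
      ∑ a, ∑ b, ∑ x, ∑ y, ∑ u, ∑ v,
        (U.1 * hblk H a b * U.1ᴴ) (x, u) (y, u) *
        (U.1 * hblk H b a * U.1ᴴ) (y, v) (x, v) ∂μ) =
    ∑ a, ∑ b, ∑ x, ∑ y, ∑ u, ∑ v, mom μ (hblk H a b) (hblk H b a) (x, u) (y, u) (y, v) (x, v) := by
  rw [integral_finsetSum _ fun a _ => integrable_finsetSum _ fun b _ =>
    integrable_finsetSum _ fun x _ => integrable_finsetSum _ fun y _ =>
    integrable_finsetSum _ fun u _ => integrable_finsetSum _ fun v _ => integrable_pair μ _ _ _ _ _ _]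
  refine Finset.sum_congr rfl fun a _ => ?_
  rw [integral_finsetSum _ fun b _ =>
    integrable_finsetSum _ fun x _ => integrable_finsetSum _ fun y _ =>
    integrable_finsetSum _ fun u _ => integrable_finsetSum _ fun v _ => integrable_pair μ _ _ _ _ _ _]
  refine Finset.sum_congr rfl fun b _ => ?_
  rw [integral_finsetSum _ fun x _ => integrable_finsetSum _ fun y _ =>
    integrable_finsetSum _ fun u _ => integrable_finsetSum _ fun v _ => integrable_pair μ _ _ _ _ _ _]
  refine Finset.sum_congr rfl fun x _ => ?_
  rw [integral_finsetSum _ fun y _ =>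
    integrable_finsetSum _ fun u _ => integrable_finsetSum _ fun v _ => integrable_pair μ _ _ _ _ _ _]
  refine Finset.sum_congr rfl fun y _ => ?_
  rw [integral_finsetSum _ fun u _ => integrable_finsetSum _ fun v _ => integrable_pair μ _ _ _ _ _ _]
  refine Finset.sum_congr rfl fun u _ => ?_
  rw [integral_finsetSum _ fun v _ => integrable_pair μ _ _ _ _ _ _]
  rfl
end meas

theorem haar_average_ptrace_sq (d : ℕ) (hd : 1 ≤ d)
    (μ : Measure (Matrix.unitaryGroup (Fin d × Fin d) ℂ)) [IsProbabilityMeasure μ]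
    (hinv : ∀ V : Matrix.unitaryGroup (Fin d × Fin d) ℂ, μ.map (fun U => V * U) = μ)
    (H : Matrix (Fin d × Fin d × Fin d) (Fin d × Fin d × Fin d) ℂ) (hH : H.IsHermitian) :
    (∫ U : Matrix.unitaryGroup (Fin d × Fin d) ℂ,
        (Matrix.trace
          (ptrace3 (((1 : Matrix (Fin d) (Fin d) ℂ) ⊗ₖ (U : Matrix _ _ ℂ)) * H *
              ((1 : Matrix (Fin d) (Fin d) ℂ) ⊗ₖ (U : Matrix _ _ ℂ))ᴴ) *
            ptrace3 (((1 : Matrix (Fin d) (Fin d) ℂ) ⊗ₖ (U : Matrix _ _ ℂ)) * H *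
              ((1 : Matrix (Fin d) (Fin d) ℂ) ⊗ₖ (U : Matrix _ _ ℂ))ᴴ))) ∂μ) =
      ((d : ℂ) / ((d : ℂ) ^ 2 + 1)) *
        ((H * H).trace + ((ptrace23 H) * (ptrace23 H)).trace) ∧
    (∫ U : Matrix.unitaryGroup (Fin d × Fin d) ℂ,
        (Matrix.trace
          (ptrace3 (((1 : Matrix (Fin d) (Fin d) ℂ) ⊗ₖ (U : Matrix _ _ ℂ)) * H *
              ((1 : Matrix (Fin d) (Fin d) ℂ) ⊗ₖ (U : Matrix _ _ ℂ))ᴴ) *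
            ptrace3 (((1 : Matrix (Fin d) (Fin d) ℂ) ⊗ₖ (U : Matrix _ _ ℂ)) * H *
              ((1 : Matrix (Fin d) (Fin d) ℂ) ⊗ₖ (U : Matrix _ _ ℂ))ᴴ))).re ∂μ) ≥
      ((d : ℝ) / ((d : ℝ) ^ 2 + 1)) * ((H * H).trace).re := by
  simp only [trace_expand]
  have hfirst : (∫ U : Matrix.unitaryGroup (Fin d × Fin d) ℂ,
      ∑ a, ∑ b, ∑ x, ∑ y, ∑ u, ∑ v,
        (U.1 * hblk H a b * U.1ᴴ) (x, u) (y, u) *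
        (U.1 * hblk H b a * U.1ᴴ) (y, v) (x, v) ∂μ) =
      ((d : ℂ) / ((d : ℂ) ^ 2 + 1)) *
        ((H * H).trace + ((ptrace23 H) * (ptrace23 H)).trace) := by
    rw [integral_big, trace_sq_blocks, trace_pt_blocks, ← Finset.sum_add_distrib, Finset.mul_sum]
    refine Finset.sum_congr rfl fun a _ => ?_
    rw [← Finset.sum_add_distrib, Finset.mul_sum]
    refine Finset.sum_congr rfl fun b _ => ?_
    rw [covar_sum hd (mom_covar μ hinv _ _), mom_sum1, mom_sum2]
    ring
  refine ⟨hfirst, ?_⟩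
  have hre := integral_re (integrable_big μ H)
  simp only [RCLike.re_to_complex] at hre
  rw [hre, hfirst]
  have hc : ((d : ℂ) / ((d : ℂ) ^ 2 + 1)) = (((d : ℝ) / ((d : ℝ) ^ 2 + 1) : ℝ) : ℂ) := by
    push_cast; rfl
  rw [hc, Complex.re_ofReal_mul, Complex.add_re]
  have := pt23_re_nonneg H hH
  exact mul_le_mul_of_nonneg_left (by linarith) (by positivity)
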